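/- arXiv:2311.06161 — 2 statements merged into one kernel-verified Lean document; each statement's English description precedes it below -/
import Mathlib

section
/- For all natural numbers n and k with k ≥ 2 and n ≥ 2k, there exists a finite simple graph G of order n such that χ(G) = ir(G) = χ_i(G) = k. -/
/-!  Common definitions: irredundance, irredundance coloring,
irredundance compelling coloring, and related graph parameters. -/

variable {V : Type*}

/-- The closed neighborhood `N[v]` of a vertex `v`. -/
def closedNbr (G : SimpleGraph V) (v : V) : Set V := insert v (G.neighborSet v)

/-- The private neighbor set `pn[v,S] = N[v] − N[S − {v}]`. -/
def pnSet (G : SimpleGraph V) (S : Set V) (v : V) : Set V :=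
  closedNbr G v \ ⋃ w ∈ S \ {v}, closedNbr G w

/-- A set `S` is irredundant if every vertex of `S` has a private neighbor. -/
def IsIrredundant (G : SimpleGraph V) (S : Set V) : Prop :=
  ∀ v ∈ S, (pnSet G S v).Nonempty

/-- A maximal irredundant set: irredundant, and adding any outside vertex
destroys irredundance. -/
def IsMaxIrredundant (G : SimpleGraph V) (S : Set V) : Prop :=
  IsIrredundant G S ∧ ∀ w ∉ S, ¬ IsIrredundant G (insert w S)

/-- The lower irredundance number `ir(G)`: the minimum cardinality of a
maximal irredundant set. -/
noncomputable def lowerIr (G : SimpleGraph V) : ℕ :=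
  sInf {n | ∃ S : Set V, IsMaxIrredundant G S ∧ S.ncard = n}

/-- A proper coloring of `G` with colors in `Fin k`, viewed as a function. -/
def IsProperColoring (G : SimpleGraph V) {k : ℕ} (C : V → Fin k) : Prop :=
  ∀ u v, G.Adj u v → C u ≠ C v

/-- `G` has an irredundance coloring with `k` colors: a proper coloring
together with a maximal irredundant set whose vertices get distinct colors. -/
def IrredColorable (G : SimpleGraph V) (k : ℕ) : Prop :=
  ∃ C : V → Fin k, IsProperColoring G C ∧
    ∃ R : Set V, IsMaxIrredundant G R ∧ Set.InjOn C R

/-- The irredundance chromatic number `χᵢ(G)`. -/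
noncomputable def irChrom (G : SimpleGraph V) : ℕ := sInf {k | IrredColorable G k}

/-- `S` is a dominating set of `G`. -/
def IsDomSet (G : SimpleGraph V) (S : Set V) : Prop :=
  ∀ v, v ∈ S ∨ ∃ u ∈ S, G.Adj u v

/-- The domination number `γ(G)`. -/
noncomputable def domNum (G : SimpleGraph V) : ℕ :=
  sInf {n | ∃ S : Set V, IsDomSet G S ∧ S.ncard = n}

/-- `G` has a gamma coloring with `k` colors: a proper coloring together with
a dominating set whose vertices get distinct colors. -/
def GammaColorable (G : SimpleGraph V) (k : ℕ) : Prop :=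
  ∃ C : V → Fin k, IsProperColoring G C ∧
    ∃ D : Set V, IsDomSet G D ∧ Set.InjOn C D

/-- The gamma chromatic number `χ_γ(G)`. -/
noncomputable def gammaChrom (G : SimpleGraph V) : ℕ := sInf {k | GammaColorable G k}

/-- A rainbow committee of the coloring `C`: a set containing exactly one
vertex of each color class. -/
def IsRainbowCommittee {k : ℕ} (C : V → Fin k) (T : Set V) : Prop :=
  ∀ i : Fin k, ∃! v, v ∈ T ∧ C v = i

/-- `C` is an irredundance compelling coloring of `G` (with all `k` colors
used): a proper coloring, onto its `k` colors, such that every rainbow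
committee is an irredundant set. -/
def IsIRCColoring (G : SimpleGraph V) {k : ℕ} (C : V → Fin k) : Prop :=
  IsProperColoring G C ∧ Function.Surjective C ∧
    ∀ T : Set V, IsRainbowCommittee C T → IsIrredundant G T

/-- `G` admits an irredundance compelling coloring. -/
def IRCColorable (G : SimpleGraph V) : Prop :=
  ∃ (k : ℕ) (C : V → Fin k), IsIRCColoring G C

/-- The irredundance compelling chromatic number `χ_irc(G)`: the maximum
number of colors among all irredundance compelling colorings of `G`. -/
noncomputable def ircChrom (G : SimpleGraph V) : ℕ :=
  sSup {k | ∃ C : V → Fin k, IsIRCColoring G C}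

/-- `G` has a dominator coloring with `k` colors: a proper coloring, onto its
`k` colors, in which every vertex dominates some color class. -/
def DominatorColorable (G : SimpleGraph V) (k : ℕ) : Prop :=
  ∃ C : V → Fin k, IsProperColoring G C ∧ Function.Surjective C ∧
    ∀ v, ∃ i : Fin k, (∀ u, C u = i → G.Adj v u) ∨ {u | C u = i} = {v}

/-- The dominator chromatic number `χ_d(G)`. -/
noncomputable def domChrom (G : SimpleGraph V) : ℕ := sInf {k | DominatorColorable G k}

/-!
Attach at least one leaf to every vertex of a graph on a vertex set `K`. In the resulting graph
`K` is an irredundant dominating set, hence a maximal irredundant set. Conversely, if an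
irredundant set `S` avoids a vertex `v ∈ K` and all of its leaves, then adding such a leaf to `S`
takes at most the private neighbor `v` away from a member of `S`, and every member of `S` keeps
another one. So a maximal irredundant set meets each of the `|K|` stars, and `ir = |K|`. As an
irredundance coloring uses at least `ir` colors, and a coloring of `K` with pairwise different
colors extends to the leaves once there are two colors, also `χᵢ = |K|`. When `K` is a clique,
`χ = |K|` as well, and order `n ≥ 2k` is what a clique on `k` vertices with its leaves needs.
-/

section Irredundance

variable {G : SimpleGraph V} {S : Set V} {u v x : V}

theorem mem_closedNbr : x ∈ closedNbr G v ↔ x = v ∨ G.Adj v x :=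
  Iff.rfl

theorem mem_pnSet :
    x ∈ pnSet G S v ↔ x ∈ closedNbr G v ∧ ∀ w ∈ S, w ≠ v → x ∉ closedNbr G w := by
  simp [pnSet]

theorem mem_pnSet_insert_of_notMem (hx : x ∈ pnSet G S v) (hxu : x ∉ closedNbr G u) :
    x ∈ pnSet G (insert u S) v := by
  rw [mem_pnSet] at hx ⊢
  refine ⟨hx.1, ?_⟩
  rintro w (rfl | hw) hwv
  · exact hxu
  · exact hx.2 w hw hwv

theorem IsIrredundant.not_closedNbr_subset (hS : IsIrredundant G S) (hu : u ∈ S) (hv : v ∈ S)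
    (huv : u ≠ v) : ¬ closedNbr G v ⊆ closedNbr G u := by
  intro hsub
  obtain ⟨x, hx⟩ := hS v hv
  rw [mem_pnSet] at hx
  exact hx.2 u hu huv (hsub hx.1)

theorem IsIrredundant.isMaxIrredundant_of_isDomSet (hS : IsIrredundant G S)
    (hdom : IsDomSet G S) : IsMaxIrredundant G S := by
  refine ⟨hS, fun w hw hirr => ?_⟩
  obtain ⟨x, hx⟩ := hirr w (Set.mem_insert w S)
  obtain ⟨u, hu, hxu⟩ : ∃ u ∈ S, x ∈ closedNbr G u := by
    rcases hdom x with hxS | ⟨u, hu, hux⟩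
    · exact ⟨x, hxS, Or.inl rfl⟩
    · exact ⟨u, hu, Or.inr hux⟩
  exact (mem_pnSet.1 hx).2 u (Or.inr hu) (ne_of_mem_of_not_mem hu hw) hxu

theorem IsMaxIrredundant.lowerIr_le (hS : IsMaxIrredundant G S) : lowerIr G ≤ S.ncard :=
  Nat.sInf_le ⟨S, hS, rfl⟩

theorem IrredColorable.colorable {m : ℕ} (h : IrredColorable G m) : G.Colorable m :=
  let ⟨C, hC, _⟩ := h
  ⟨SimpleGraph.Coloring.mk C fun {u v} huv => hC u v huv⟩

theorem IrredColorable.lowerIr_le {m : ℕ} (h : IrredColorable G m) : lowerIr G ≤ m := by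
  obtain ⟨C, -, R, hR, hinj⟩ := h
  calc lowerIr G ≤ R.ncard := hR.lowerIr_le
    _ ≤ (Set.univ : Set (Fin m)).ncard :=
      Set.ncard_le_ncard_of_injOn C (fun _ _ => Set.mem_univ _) hinj
    _ = m := by simp

end Irredundance

/-- `G` is a generalized corona with core `K`: it arises from a graph on `K` by attaching at least
one leaf to every vertex of `K`. Every vertex outside `K` is one of these leaves. -/
structure IsCoronaCore (G : SimpleGraph V) (K : Set V) : Prop where
  exists_neighborSet_eq : ∀ p ∉ K, ∃ v ∈ K, G.neighborSet p = {v}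
  exists_leaf : ∀ v ∈ K, ∃ p ∉ K, G.Adj v p

namespace IsCoronaCore

variable {G : SimpleGraph V} {K S : Set V} {p v w : V}

theorem mem_core_of_adj (hG : IsCoronaCore G K) (hp : p ∉ K) (hv : G.Adj v p) : v ∈ K := by
  obtain ⟨u, hu, hN⟩ := hG.exists_neighborSet_eq p hp
  obtain rfl : v = u := hN.subset hv.symm
  exact hu

theorem eq_of_adj_leaf (hG : IsCoronaCore G K) (hp : p ∉ K) (hv : G.Adj v p) (hw : G.Adj w p) :
    w = v := by
  obtain ⟨u, -, hN⟩ := hG.exists_neighborSet_eq p hp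
  exact (show w = u from hN.subset hw.symm).trans (show v = u from hN.subset hv.symm).symm

theorem mem_closedNbr_leaf (hG : IsCoronaCore G K) (hp : p ∉ K) (hv : G.Adj v p) :
    w ∈ closedNbr G p ↔ w = p ∨ w = v := by
  rw [mem_closedNbr]
  exact or_congr_right ⟨fun hw => hG.eq_of_adj_leaf hp hv hw.symm, fun hw => hw ▸ hv.symm⟩

theorem leaf_mem_closedNbr (hG : IsCoronaCore G K) (hp : p ∉ K) (hv : G.Adj v p) :
    p ∈ closedNbr G w ↔ w = p ∨ w = v := by
  rw [← hG.mem_closedNbr_leaf hp hv, mem_closedNbr, mem_closedNbr, eq_comm, G.adj_comm]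

theorem closedNbr_leaf_subset (hG : IsCoronaCore G K) (hp : p ∉ K) (hv : G.Adj v p) :
    closedNbr G p ⊆ closedNbr G v := by
  intro x hx
  rcases (hG.mem_closedNbr_leaf hp hv).1 hx with rfl | rfl
  · exact Or.inr hv
  · exact Or.inl rfl

theorem isDomSet (hG : IsCoronaCore G K) : IsDomSet G K := by
  intro v
  by_cases hv : v ∈ K
  · exact Or.inl hv
  · obtain ⟨u, hu, hN⟩ := hG.exists_neighborSet_eq v hv
    have huv : G.Adj v u := hN.superset rfl
    exact Or.inr ⟨u, hu, huv.symm⟩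

theorem isIrredundant (hG : IsCoronaCore G K) : IsIrredundant G K := by
  intro v hv
  obtain ⟨p, hp, hvp⟩ := hG.exists_leaf v hv
  refine ⟨p, mem_pnSet.2 ⟨Or.inr hvp, fun w hw hwv hpw => ?_⟩⟩
  rcases (hG.leaf_mem_closedNbr hp hvp).1 hpw with rfl | rfl
  · exact hp hw
  · exact hwv rfl

theorem isMaxIrredundant (hG : IsCoronaCore G K) : IsMaxIrredundant G K :=
  hG.isIrredundant.isMaxIrredundant_of_isDomSet hG.isDomSet

theorem leaf_mem_pnSet (hG : IsCoronaCore G K) (hS : IsIrredundant G S) (hvS : v ∈ S)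
    (hp : p ∉ K) (hv : G.Adj v p) : p ∈ pnSet G S v := by
  refine mem_pnSet.2 ⟨Or.inr hv, fun w hw hwv hpw => ?_⟩
  obtain rfl : w = p := ((hG.leaf_mem_closedNbr hp hv).1 hpw).resolve_right hwv
  exact hS.not_closedNbr_subset hvS hw hwv.symm (hG.closedNbr_leaf_subset hp hv)

theorem exists_mem_pnSet_ne (hG : IsCoronaCore G K) (hS : IsIrredundant G S) (hv : v ∈ K)
    (hstar : ∀ s ∈ S, s ≠ v ∧ (s ∉ K → ¬ G.Adj v s)) (hw : w ∈ S) :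
    ∃ x ∈ pnSet G S w, x ≠ v := by
  by_cases hwK : w ∈ K
  · obtain ⟨q, hq, hwq⟩ := hG.exists_leaf w hwK
    exact ⟨q, hG.leaf_mem_pnSet hS hw hq hwq, (ne_of_mem_of_not_mem hv hq).symm⟩
  · obtain ⟨x, hx⟩ := hS w hw
    refine ⟨x, hx, ?_⟩
    rintro rfl
    rcases (mem_pnSet.1 hx).1 with hxw | hwx
    · exact (hstar w hw).1 hxw.symm
    · exact (hstar w hw).2 hwK hwx.symm

theorem exists_mem_star (hG : IsCoronaCore G K) (hS : IsMaxIrredundant G S) (hv : v ∈ K) :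
    ∃ s ∈ S, s = v ∨ s ∉ K ∧ G.Adj v s := by
  by_contra! hstar
  obtain ⟨p, hp, hvp⟩ := hG.exists_leaf v hv
  have hpS : p ∉ S := fun h => (hstar p h).2 hp hvp
  have hpN : ∀ w ∈ S, p ∉ closedNbr G w := by
    intro w hw hpw
    rcases (hG.leaf_mem_closedNbr hp hvp).1 hpw with rfl | rfl
    · exact hpS hw
    · exact (hstar w hw).1 rfl
  refine hS.2 p hpS ?_
  rintro w (rfl | hw)
  · refine ⟨w, mem_pnSet.2 ⟨Or.inl rfl, ?_⟩⟩
    rintro s (rfl | hs) hsw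
    · exact absurd rfl hsw
    · exact hpN s hs
  · obtain ⟨x, hx, hxv⟩ := hG.exists_mem_pnSet_ne hS.1 hv hstar hw
    have hxp : x ≠ p := by
      rintro rfl
      exact hpN w hw (mem_pnSet.1 hx).1
    refine ⟨x, mem_pnSet_insert_of_notMem hx ?_⟩
    rw [hG.mem_closedNbr_leaf hp hvp]
    exact not_or.2 ⟨hxp, hxv⟩

theorem encard_le_of_isMaxIrredundant (hG : IsCoronaCore G K) (hS : IsMaxIrredundant G S) :
    K.encard ≤ S.encard := by
  choose! f hfS hf using fun v (hv : v ∈ K) => hG.exists_mem_star hS hv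
  refine Set.encard_le_encard_of_injOn hfS fun u hu v hv huv => ?_
  rcases hf u hu with hfu | ⟨hfu, hu_adj⟩ <;> rcases hf v hv with hfv | ⟨hfv, hv_adj⟩
  · exact hfu.symm.trans (huv.trans hfv)
  · exact absurd (huv ▸ hfu.symm ▸ hu) hfv
  · exact absurd (huv.symm ▸ hfv.symm ▸ hv) hfu
  · exact hG.eq_of_adj_leaf hfv hv_adj (huv ▸ hu_adj)

theorem lowerIr_eq_ncard [Finite V] (hG : IsCoronaCore G K) : lowerIr G = K.ncard := by
  refine le_antisymm hG.isMaxIrredundant.lowerIr_le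
    (le_csInf ⟨_, K, hG.isMaxIrredundant, rfl⟩ ?_)
  rintro _ ⟨S, hS, rfl⟩
  exact ENat.toNat_le_toNat (hG.encard_le_of_isMaxIrredundant hS) S.toFinite.encard_lt_top.ne

theorem exists_coloring_extending {α : Type*} [Nontrivial α] (hG : IsCoronaCore G K)
    (c : (G.induce K).Coloring α) : ∃ C : G.Coloring α, ∀ v : K, C v = c v := by
  have hcolor (v : V) : ∃ a, (∀ hv : v ∈ K, a = c ⟨v, hv⟩) ∧
      (v ∉ K → ∀ u : K, G.Adj u v → a ≠ c u) := by
    by_cases hv : v ∈ K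
    · exact ⟨c ⟨v, hv⟩, fun _ => rfl, fun h => absurd hv h⟩
    · obtain ⟨w, hw, hN⟩ := hG.exists_neighborSet_eq v hv
      obtain ⟨a, ha⟩ := exists_ne (c ⟨w, hw⟩)
      refine ⟨a, fun h => absurd h hv, fun _ => ?_⟩
      rintro ⟨u, hu⟩ huv
      obtain rfl : u = w := hN.subset huv.symm
      exact ha
  choose C hcore hleaf using hcolor
  refine ⟨SimpleGraph.Coloring.mk C fun {u v} huv => ?_, fun v => hcore v v.2⟩
  by_cases hu : u ∈ K <;> by_cases hv : v ∈ K
  · rw [hcore u hu, hcore v hv]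
    exact c.valid huv
  · rw [hcore u hu]
    exact (hleaf v hv ⟨u, hu⟩ huv).symm
  · rw [hcore v hv]
    exact hleaf u hu ⟨v, hv⟩ huv.symm
  · exact absurd (hG.mem_core_of_adj hv huv) hu

theorem irredColorable_ncard (hG : IsCoronaCore G K) (hK : 2 ≤ K.ncard) :
    IrredColorable G K.ncard := by
  have : Finite K := Set.finite_of_ncard_pos (by omega)
  have : Nontrivial (Fin K.ncard) := Fin.nontrivial_iff_two_le.2 hK
  let e : K ≃ Fin K.ncard := Finite.equivFin K
  obtain ⟨C, hC⟩ := hG.exists_coloring_extending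
    (SimpleGraph.Coloring.mk e fun {_ _} huv => e.injective.ne huv.ne)
  refine ⟨C, fun _ _ => C.valid, K, hG.isMaxIrredundant, fun u hu v hv huv => ?_⟩
  have he : e ⟨u, hu⟩ = e ⟨v, hv⟩ := (hC ⟨u, hu⟩).symm.trans (huv.trans (hC ⟨v, hv⟩))
  exact congrArg Subtype.val (e.injective he)

theorem irChrom_eq_ncard [Finite V] (hG : IsCoronaCore G K) (hK : 2 ≤ K.ncard) :
    irChrom G = K.ncard := by
  have hcol := hG.irredColorable_ncard hK
  refine le_antisymm (Nat.sInf_le hcol) (le_csInf ⟨_, hcol⟩ fun m hm => ?_)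
  rw [← hG.lowerIr_eq_ncard]
  exact IrredColorable.lowerIr_le hm

theorem chromaticNumber_eq_ncard (hG : IsCoronaCore G K) (hclique : G.IsClique K)
    (hK : 2 ≤ K.ncard) : G.chromaticNumber = K.ncard := by
  refine le_antisymm (hG.irredColorable_ncard hK).colorable.chromaticNumber_le ?_
  lift K to Finset V using Set.finite_of_ncard_pos (by omega)
  rw [Set.ncard_coe_finset]
  exact hclique.card_le_chromaticNumber

end IsCoronaCore

/-- The complete graph on the fixed points of `r`, with every other vertex `p` joined to `r p`.
For idempotent `r` the vertices that `r` moves are leaves. -/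
def leafedClique (r : V → V) : SimpleGraph V :=
  SimpleGraph.fromRel fun u v => r u = v ∨ r u = u ∧ r v = v

theorem isClique_leafedClique (r : V → V) :
    (leafedClique r).IsClique (Function.fixedPoints r) :=
  fun _ hu _ hv huv => ⟨huv, Or.inl (Or.inr ⟨hu, hv⟩)⟩

theorem isCoronaCore_leafedClique {r : V → V} (hr : ∀ v, r (r v) = r v)
    (hleaf : ∀ v, r v = v → ∃ p ≠ v, r p = v) :
    IsCoronaCore (leafedClique r) (Function.fixedPoints r) where
  exists_neighborSet_eq p (hp : r p ≠ p) := by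
    refine ⟨r p, hr p, Set.ext fun w => ⟨?_, ?_⟩⟩
    · rintro ⟨-, (hw | ⟨h, -⟩) | (rfl | ⟨-, h⟩)⟩
      · exact hw.symm
      · exact absurd h hp
      · exact absurd (hr w) hp
      · exact absurd h hp
    · rintro rfl
      exact ⟨hp.symm, Or.inl (Or.inl rfl)⟩
  exists_leaf v hv := by
    obtain ⟨p, hpv, hp⟩ := hleaf v hv
    refine ⟨p, fun h => hpv ?_, hpv.symm, Or.inr (Or.inl hp)⟩
    exact (show r p = p from h).symm.trans hp

section ResidueRetraction

variable {n k : ℕ}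

/-- The map `v ↦ v % k` on `Fin n`, a retraction onto the vertices below `k` when `0 < k ≤ n`. -/
def finMod (n k : ℕ) (v : Fin n) : Fin n :=
  ⟨v % k, (Nat.mod_le v k).trans_lt v.isLt⟩

theorem finMod_eq_self_iff (hk : 0 < k) {v : Fin n} : finMod n k v = v ↔ v.val < k := by
  rw [Fin.ext_iff]
  exact Nat.mod_eq_iff_lt hk.ne'

theorem finMod_finMod (v : Fin n) : finMod n k (finMod n k v) = finMod n k v :=
  Fin.ext (Nat.mod_mod v k)

theorem exists_ne_finMod_eq (hk : 0 < k) (hn : 2 * k ≤ n) {v : Fin n} (hv : finMod n k v = v) :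
    ∃ p ≠ v, finMod n k p = v := by
  have hvk : v.val < k := (finMod_eq_self_iff hk).1 hv
  refine ⟨⟨v + k, by omega⟩, fun h => ?_, ?_⟩
  · have : v.val + k = v := congrArg Fin.val h
    omega
  · exact Fin.ext ((Nat.add_mod_right v k).trans (Nat.mod_eq_of_lt hvk))

theorem ncard_fixedPoints_finMod (hk : 0 < k) (hn : k ≤ n) :
    (Function.fixedPoints (finMod n k)).ncard = k := by
  have hrange : Function.fixedPoints (finMod n k) = Set.range (Fin.castLE hn) := by
    ext v
    rw [Fin.range_castLE]
    exact finMod_eq_self_iff hk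
  rw [hrange, Set.ncard_range_of_injective (Fin.castLE_injective hn), Nat.card_fin]

end ResidueRetraction

/-- for `k ≥ 2` and `n ≥ 2k` there exists a graph of order `n`
with `χ(G) = ir(G) = χᵢ(G) = k`. -/
theorem exists_graph_chrom_eq_ir_eq_irChrom (n k : ℕ) (hk : 2 ≤ k) (hn : 2 * k ≤ n) :
    ∃ G : SimpleGraph (Fin n),
      G.chromaticNumber = (k : ℕ∞) ∧ lowerIr G = k ∧ irChrom G = k := by
  have hk_pos : 0 < k := by omega
  have hcore : IsCoronaCore (leafedClique (finMod n k)) (Function.fixedPoints (finMod n k)) :=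
    isCoronaCore_leafedClique finMod_finMod fun _ => exists_ne_finMod_eq hk_pos hn
  have hcard : (Function.fixedPoints (finMod n k)).ncard = k :=
    ncard_fixedPoints_finMod hk_pos (by omega)
  have htwo : 2 ≤ (Function.fixedPoints (finMod n k)).ncard := hcard.symm ▸ hk
  refine ⟨leafedClique (finMod n k), ?_, ?_, ?_⟩
  · rw [hcore.chromaticNumber_eq_ncard (isClique_leafedClique _) htwo, hcard]
  · rw [hcore.lowerIr_eq_ncard, hcard]
  · rw [hcore.irChrom_eq_ncard htwo, hcard]
end

section
/- Let G be a finite simple graph and let Q ⊆ V(G) be a clique of G. If there exists a vertex v ∈ Q such that pn[v,Q] = ∅, then G does not admit an irredundance compelling coloring. -/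
/-!  Common definitions: irredundance, irredundance coloring,
irredundance compelling coloring, and related graph parameters. -/

variable {V : Type*}

theorem pnSet_anti (G : SimpleGraph V) {S T : Set V} (hST : S ⊆ T) (v : V) :
    pnSet G T v ⊆ pnSet G S v :=
  Set.sdiff_subset_sdiff_right (Set.biUnion_subset_biUnion_left (Set.sdiff_subset_sdiff_left hST))

theorem IsIrredundant.subset {G : SimpleGraph V} {S T : Set V} (hST : S ⊆ T)
    (hT : IsIrredundant G T) : IsIrredundant G S :=
  fun v hv => (hT v (hST hv)).mono (pnSet_anti G hST v)

section Coloring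

variable {G : SimpleGraph V} {k : ℕ} {C : V → Fin k} {S T : Set V}

theorem IsProperColoring.injOn_of_isClique (hC : IsProperColoring G C) (hS : G.IsClique S) :
    Set.InjOn C S :=
  fun u hu w hw hcolor => by_contra fun hne => hC u w (hS hu hw hne) hcolor

theorem isRainbowCommittee_of_bijOn (hT : Set.BijOn C T Set.univ) : IsRainbowCommittee C T := by
  intro i
  obtain ⟨u, hu, hui⟩ := hT.surjOn (Set.mem_univ i)
  exact ⟨u, ⟨hu, hui⟩, fun w ⟨hw, hwi⟩ => hT.injOn hw hu (hwi.trans hui.symm)⟩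

theorem exists_isRainbowCommittee_superset (hC : Function.Surjective C) (hS : Set.InjOn C S) :
    ∃ T, S ⊆ T ∧ IsRainbowCommittee C T := by
  obtain ⟨T, hST, hT⟩ := hS.bijOn_image.exists_extend (Set.subset_univ _) hC.range_eq.ge
  exact ⟨T, hST, isRainbowCommittee_of_bijOn hT⟩

theorem IsIRCColoring.isIrredundant_of_injOn (hC : IsIRCColoring G C) (hS : Set.InjOn C S) :
    IsIrredundant G S := by
  obtain ⟨-, hsurj, hcommittee⟩ := hC
  obtain ⟨T, hST, hT⟩ := exists_isRainbowCommittee_superset hsurj hS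
  exact (hcommittee T hT).subset hST

end Coloring

theorem IRCColorable.isIrredundant_of_isClique {G : SimpleGraph V} {Q : Set V}
    (hG : IRCColorable G) (hQ : G.IsClique Q) : IsIrredundant G Q := by
  obtain ⟨k, C, hC⟩ := hG
  exact hC.isIrredundant_of_injOn (hC.1.injOn_of_isClique hQ)

theorem not_IRCColorable_of_clique_vertex_no_private_neighbor_general (G : SimpleGraph V)
    (Q : Set V) (hQ : G.IsClique Q) (v : V) (hv : v ∈ Q) (hpn : pnSet G Q v = ∅) :
    ¬ IRCColorable G :=
  fun hG => (hG.isIrredundant_of_isClique hQ v hv).ne_empty hpn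

/-- if some vertex of a clique `Q` has empty private neighbor
set with respect to `Q`, then `G` is not IRC-colorable. -/
theorem not_IRCColorable_of_clique_vertex_no_private_neighbor
    {V : Type*} [Fintype V] (G : SimpleGraph V) (Q : Set V)
    (hQ : G.IsClique Q) (v : V) (hv : v ∈ Q) (hpn : pnSet G Q v = ∅) :
    ¬ IRCColorable G :=
  not_IRCColorable_of_clique_vertex_no_private_neighbor_general G Q hQ v hv hpn
end
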